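/- Fix an integer d ≥ 2. Let p be a prime, set M = ⌊(1/2)·log_{2d−1}(p)⌋, and let F ⊆ (SL₂(ℤ/pℤ))^d be the set of all tuples S = (g₁, …, g_d) such that no nontrivial word of length at most M evaluates at S to id or −id; assume F is nonempty. Let π be a nontrivial irreducible unitary representation of SL₂(ℤ/pℤ) of dimension d(π). Then for every integer m with 1 ≤ m ≤ M, (1/|F|)·Σ_{S ∈ F} ((1/d(π))·tr(A_{π,S}^m) − N(d, m))² ≤ 2·(2d)^{2m}·|SL₂(ℤ/pℤ)| / ((p² − 1)·d(π)²). -/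

import Mathlib

open MeasureTheory

noncomputable section

abbrev SL (n p : ℕ) := Matrix.SpecialLinearGroup (Fin n) (ZMod p)

/-- Density of the Kesten–McKay law with parameter `2d`. -/
noncomputable def kmDensity (d : ℕ) (x : ℝ) : ℝ :=
  if x ^ 2 ≤ 4 * (2 * (d : ℝ) - 1) then
    2 * d * Real.sqrt (4 * (2 * (d : ℝ) - 1) - x ^ 2) /
      (2 * Real.pi * ((2 * (d : ℝ)) ^ 2 - x ^ 2))
  else 0

/-- The Kesten–McKay law with parameter `2d`, as a measure on `ℝ`. -/
noncomputable def kestenMcKay (d : ℕ) : Measure ℝ :=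
  MeasureTheory.volume.withDensity fun x => ENNReal.ofReal (kmDensity d x)

/-- Discrepancy between two measures on ℝ. -/
noncomputable def discrepancy (ν μ : Measure ℝ) : ℝ :=
  sSup {r : ℝ | ∃ a b : ℝ, a ≤ b ∧
    r = |(ν (Set.Icc a b)).toReal - (μ (Set.Icc a b)).toReal|}

/-- The element of the free group on `d` generators given by a word of length `m`. -/
def wordProd {d m : ℕ} (w : Fin m → Fin d × Bool) : FreeGroup (Fin d) :=
  (List.ofFn fun j => if (w j).2 then FreeGroup.of (w j).1 else (FreeGroup.of (w j).1)⁻¹).prod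

/-- Evaluation of a word of length `m` in `d` letters at a tuple `S`. -/
def wordEval {G : Type*} [Group G] {d m : ℕ} (S : Fin d → G) (w : Fin m → Fin d × Bool) : G :=
  (List.ofFn fun j => if (w j).2 then S (w j).1 else (S (w j).1)⁻¹).prod

/-- `N(d,m)`: the number of trivial words of length `m` in `d` letters. -/
noncomputable def Ntriv (d m : ℕ) : ℕ :=
  Nat.card {w : Fin m → Fin d × Bool // wordProd w = 1}

/-- `A_{π,S} = Σᵢ (π gᵢ + (π gᵢ)⁻¹)`. -/
noncomputable def Amat {G : Type*} [Group G] {n d : ℕ}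
    (π : G →* Matrix.unitaryGroup (Fin n) ℂ) (S : Fin d → G) : Matrix (Fin n) (Fin n) ℂ :=
  ∑ i, ((π (S i) : Matrix (Fin n) (Fin n) ℂ) + ((π (S i))⁻¹ : Matrix (Fin n) (Fin n) ℂ))

/-- Spectral probability measure of a Hermitian matrix. -/
noncomputable def specMeasure {n : ℕ} (A : Matrix (Fin n) (Fin n) ℂ) : Measure ℝ := by
  classical
  exact if hA : A.IsHermitian then
    (n : ENNReal)⁻¹ • ∑ j : Fin n, Measure.dirac (hA.eigenvalues j) else 0

/-- A unitary representation is irreducible if the only invariant subspaces are `⊥` and `⊤`. -/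
def IsIrreducibleRep {G : Type*} [Group G] {n : ℕ}
    (π : G →* Matrix.unitaryGroup (Fin n) ℂ) : Prop :=
  ∀ W : Submodule ℂ (Fin n → ℂ),
    (∀ g : G, ∀ v ∈ W, (π g : Matrix (Fin n) (Fin n) ℂ).mulVec v ∈ W) → W = ⊥ ∨ W = ⊤

/-- Number of eigenvalues of a Hermitian matrix with `|λ| > t`, with multiplicity. -/
noncomputable def excCount {n : ℕ} (A : Matrix (Fin n) (Fin n) ℂ) (t : ℝ) : ℕ := by
  classical
  exact if hA : A.IsHermitian then
    (Finset.univ.filter fun j : Fin n => t < |hA.eigenvalues j|).card else 0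

end

open Matrix in
theorem schur_scalar {G : Type*} [Group G] {n : ℕ} (hn : 0 < n)
    (π : G →* Matrix.unitaryGroup (Fin n) ℂ) (hirr : IsIrreducibleRep π)
    (T : Matrix (Fin n) (Fin n) ℂ)
    (hT : ∀ g, (π g : Matrix (Fin n) (Fin n) ℂ) * T = T * (π g : Matrix (Fin n) (Fin n) ℂ)) :
    ∃ l : ℂ, T = l • (1 : Matrix (Fin n) (Fin n) ℂ) := by
  haveI : Nonempty (Fin n) := ⟨⟨0, hn⟩⟩
  obtain ⟨l, hl⟩ := Module.End.exists_eigenvalue (Matrix.toLin' T)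
  refine ⟨l, ?_⟩
  have h := hirr (Module.End.eigenspace (Matrix.toLin' T) l) (by
    intro g v hv
    rw [Module.End.mem_eigenspace_iff, Matrix.toLin'_apply] at hv ⊢
    rw [Matrix.mulVec_mulVec, ← hT, ← Matrix.mulVec_mulVec, hv, Matrix.mulVec_smul])
  rcases h with h | h
  · exact absurd h hl
  · apply Matrix.toLin'.injective
    ext1
    ext1
    rename_i i
    have hv : (Pi.single i 1 : Fin n → ℂ) ∈ Module.End.eigenspace (Matrix.toLin' T) l := by
      rw [h]; trivial
    rw [Module.End.mem_eigenspace_iff] at hv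
    simpa using hv

open Matrix in
theorem sum_normSq_char {G : Type*} [Group G] [Fintype G] {n : ℕ} (hn : 0 < n)
    (π : G →* Matrix.unitaryGroup (Fin n) ℂ) (hirr : IsIrreducibleRep π) :
    ∑ g, ‖(π g : Matrix (Fin n) (Fin n) ℂ).trace‖ ^ 2 = (Fintype.card G : ℝ) := by
  set ρ : G → Matrix (Fin n) (Fin n) ℂ := fun g => (π g : Matrix (Fin n) (Fin n) ℂ) with hρ
  have hmul : ∀ g h, ρ (g * h) = ρ g * ρ h := fun g h => by simp [hρ]
  have hstar : ∀ g, star (ρ g) * ρ g = 1 := fun g => Matrix.mem_unitaryGroup_iff'.1 (π g).2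
  have hstar' : ∀ g, ρ g * star (ρ g) = 1 := fun g => Matrix.mem_unitaryGroup_iff.1 (π g).2
  let T : Fin n → Fin n → Matrix (Fin n) (Fin n) ℂ := fun i j =>
    ∑ g, ρ g * Matrix.single i j 1 * star (ρ g)
  have hcomm : ∀ i j h, ρ h * T i j = T i j * ρ h := by
    intro i j h
    have h1 : ρ h * T i j * star (ρ h) = T i j := by
      simp only [T, Finset.mul_sum, Finset.sum_mul]
      rw [← Equiv.sum_comp (Equiv.mulLeft h) (fun g => ρ g * Matrix.single i j 1 * star (ρ g))]
      refine Finset.sum_congr rfl fun g _ => ?_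
      simp only [Equiv.coe_mulLeft, hmul, star_mul, mul_assoc]
    calc ρ h * T i j = ρ h * T i j * (star (ρ h) * ρ h) := by rw [hstar, mul_one]
      _ = ρ h * T i j * star (ρ h) * ρ h := by simp only [mul_assoc]
      _ = _ := by rw [h1]
  have hT : ∀ i j, T i j i j = if i = j then (Fintype.card G : ℂ) / n else 0 := by
    intro i j
    obtain ⟨l, hl⟩ := schur_scalar hn π hirr (T i j) (hcomm i j)
    have htr : (T i j).trace = (Fintype.card G : ℂ) * (if i = j then 1 else 0) := by
      simp only [T, Matrix.trace_sum]
      have : ∀ g, (ρ g * Matrix.single i j 1 * star (ρ g)).trace = if i = j then (1:ℂ) else 0 := by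
        intro g
        rw [Matrix.trace_mul_comm, ← mul_assoc, hstar, one_mul]
        split_ifs with hij
        · subst hij; simp
        · exact Matrix.trace_single_eq_of_ne _ _ _ hij
      simp [this]
    rw [hl] at htr
    have hn0 : (n : ℂ) ≠ 0 := by exact_mod_cast hn.ne'
    simp only [Matrix.trace_smul, Matrix.trace_one, Fintype.card_fin, smul_eq_mul] at htr
    rw [hl]
    by_cases hij : i = j
    · simp [hij] at htr ⊢
      field_simp
      exact htr
    · simp [hij]
  have hkey : ∑ g, (ρ g).trace * star (ρ g).trace = (Fintype.card G : ℂ) := by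
    have : ∀ i j, T i j i j = ∑ g, ρ g i i * star (ρ g j j) := by
      intro i j
      simp only [T, Matrix.sum_apply]
      refine Finset.sum_congr rfl fun g _ => ?_
      simp [Matrix.mul_apply, Matrix.single_apply, Finset.sum_ite_eq, ite_and]
    have hn0 : (n : ℂ) ≠ 0 := by exact_mod_cast hn.ne'
    calc ∑ g, (ρ g).trace * star (ρ g).trace
        = ∑ g, ∑ i, ∑ j, ρ g i i * star (ρ g j j) := by
          refine Finset.sum_congr rfl fun g _ => ?_
          simp only [Matrix.trace, Matrix.diag, star_sum, Finset.sum_mul_sum]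
      _ = ∑ i, ∑ j, T i j i j := by
          rw [Finset.sum_comm]
          refine Finset.sum_congr rfl fun i _ => ?_
          rw [Finset.sum_comm]
          exact Finset.sum_congr rfl fun j _ => (this i j).symm
      _ = _ := by
          simp only [hT]
          simp
          field_simp
  have : ((∑ g, ‖(ρ g).trace‖ ^ 2 : ℝ) : ℂ) = ((Fintype.card G : ℝ) : ℂ) := by
    push_cast
    rw [← hkey]
    refine Finset.sum_congr rfl fun g _ => ?_
    exact (Complex.mul_conj' _).symm
  exact_mod_cast this

open Classical in
theorem char_bound {G : Type*} [Group G] [Fintype G] {n : ℕ} (hn : 0 < n)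
    (π : G →* Matrix.unitaryGroup (Fin n) ℂ) (hirr : IsIrreducibleRep π) (c : G) (K : ℕ)
    (hK : (Finset.univ.filter fun g : G => g * c = c * g).card ≤ K) :
    ‖(π c : Matrix (Fin n) (Fin n) ℂ).trace‖ ^ 2 ≤ K := by
  set f : G → ℝ := fun g => ‖(π g : Matrix (Fin n) (Fin n) ℂ).trace‖ ^ 2 with hf
  have hsum : ∑ g, f g = (Fintype.card G : ℝ) := sum_normSq_char hn π hirr
  have hconj : ∀ g, f (g * c * g⁻¹) = f c := by
    intro g
    simp only [hf]
    congr 2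
    have h1 : (π (g⁻¹) : Matrix (Fin n) (Fin n) ℂ) * (π g : Matrix (Fin n) (Fin n) ℂ) = 1 := by
      rw [← Submonoid.coe_mul, ← map_mul]; simp
    rw [map_mul, map_mul, Submonoid.coe_mul, Submonoid.coe_mul, Matrix.trace_mul_comm,
      ← mul_assoc, h1, one_mul]
  have hfib : ∀ h : G, (Finset.univ.filter fun g : G => g * c * g⁻¹ = h).card ≤ K := by
    intro h
    rcases Finset.eq_empty_or_nonempty (Finset.univ.filter fun g : G => g * c * g⁻¹ = h) with h0 | ⟨g0, hg0⟩
    · simp [h0]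
    · refine le_trans (Finset.card_le_card_of_injOn (fun g => g0⁻¹ * g) ?_ ?_) hK
      · intro g hg
        simp only [Finset.coe_filter, Finset.mem_univ, true_and, Set.mem_setOf_eq, Finset.mem_filter] at hg hg0 ⊢
        rw [← hg0] at hg
        have : g * c = g0 * c * g0⁻¹ * g := by rw [← hg]; group
        rw [mul_assoc, this]; group
      · intro a _ b _ hab
        simpa using hab
  have h1 : (Fintype.card G : ℝ) * f c ≤ K * (Fintype.card G : ℝ) := by
    calc (Fintype.card G : ℝ) * f c = ∑ g : G, f (g * c * g⁻¹) := by simp [hconj]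
      _ = ∑ h : G, ∑ g ∈ Finset.univ.filter (fun g : G => g * c * g⁻¹ = h), f (g * c * g⁻¹) :=
          (Finset.sum_fiberwise _ _ _).symm
      _ = ∑ h : G, ((Finset.univ.filter fun g : G => g * c * g⁻¹ = h).card : ℝ) * f h := by
          refine Finset.sum_congr rfl fun h _ => ?_
          rw [Finset.sum_congr rfl (g := fun _ => f h), Finset.sum_const, nsmul_eq_mul]
          intro g hg
          rw [(Finset.mem_filter.1 hg).2]
      _ ≤ ∑ h : G, (K : ℝ) * f h := by
          refine Finset.sum_le_sum fun h _ => ?_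
          exact mul_le_mul_of_nonneg_right (by exact_mod_cast hfib h) (by positivity)
      _ = _ := by rw [← Finset.mul_sum, hsum]
  have hpos : (0 : ℝ) < Fintype.card G := by exact_mod_cast Fintype.card_pos
  nlinarith

theorem SL_ext2 {p : ℕ} (g h : SL 2 p) (h00 : g.1 0 0 = h.1 0 0) (h01 : g.1 0 1 = h.1 0 1)
    (h10 : g.1 1 0 = h.1 1 0) (h11 : g.1 1 1 = h.1 1 1) : g = h := by
  apply Subtype.ext
  ext i j
  fin_cases i <;> fin_cases j <;> assumption

theorem SL_comm_eqs {p : ℕ} (h c : SL 2 p) (H : h * c = c * h) :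
    h.1 0 1 * c.1 1 0 = c.1 0 1 * h.1 1 0 ∧
    h.1 0 0 * c.1 0 1 + h.1 0 1 * c.1 1 1 = c.1 0 0 * h.1 0 1 + c.1 0 1 * h.1 1 1 ∧
    h.1 1 0 * c.1 0 0 + h.1 1 1 * c.1 1 0 = c.1 1 0 * h.1 0 0 + c.1 1 1 * h.1 1 0 ∧
    h.1 0 0 * h.1 1 1 - h.1 0 1 * h.1 1 0 = 1 := by
  have H' : h.1 * c.1 = c.1 * h.1 := congrArg Subtype.val H
  have e00 := congrFun (congrFun H' 0) 0
  have e01 := congrFun (congrFun H' 0) 1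
  have e10 := congrFun (congrFun H' 1) 0
  have hd := h.2
  rw [Matrix.det_fin_two] at hd
  simp only [Matrix.mul_apply, Fin.sum_univ_two] at e00 e01 e10
  refine ⟨by linear_combination e00, e01, e10, hd⟩

open Classical in
theorem card_le_two_fib {α β : Type*} (s : Finset α) [Fintype β] (f : α → β) (u : α → β)
    (huniq : ∀ a ∈ s, ∀ b ∈ s, f a = f b → u a = u b → a = b)
    (k : β → β → β) (hk : ∀ a ∈ s, ∀ b ∈ s, f a = f b → a ≠ b → u b = k (f a) (u a)) :
    s.card ≤ 2 * Fintype.card β := by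
  have := Finset.card_le_mul_card_image_of_maps_to (s := s) (t := (Finset.univ : Finset β)) (f := f)
    (fun _ _ => Finset.mem_univ _) 2 (by
      intro b _
      by_contra! hlt
      obtain ⟨x, y, z, hx, hy, hz, hxy, hxz, hyz⟩ := Finset.two_lt_card_iff.1 hlt
      simp only [Finset.mem_filter] at hx hy hz
      apply hyz
      refine huniq y hy.1 z hz.1 (hy.2.trans hz.2.symm) ?_
      rw [hk x hx.1 y hy.1 (hx.2.trans hy.2.symm) hxy, hk x hx.1 z hz.1 (hx.2.trans hz.2.symm) hxz])
  simpa using this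

open Classical in
theorem centralizer_card {p : ℕ} [Fact p.Prime] (c : SL 2 p) (h1 : c ≠ 1)
    (h2 : c.1 ≠ -1) :
    (Finset.univ.filter fun g : SL 2 p => g * c = c * g).card ≤ 2 * p := by
  by_cases hb : c.1 0 1 = 0
  · by_cases hc : c.1 1 0 = 0
    · have had : c.1 0 0 ≠ c.1 1 1 := by
        intro had
        have hd := c.2
        rw [Matrix.det_fin_two, hb, ← had] at hd
        have : (c.1 0 0 - 1) * (c.1 0 0 + 1) = 0 := by linear_combination hd
        rcases mul_eq_zero.1 this with h | h
        · apply h1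
          apply SL_ext2 <;> simp [hb, hc, ← had] <;> linear_combination h
        · apply h2
          ext i j
          fin_cases i <;> fin_cases j <;> simp [hb, hc, ← had] <;> linear_combination h
      have hz : ∀ h : SL 2 p, h * c = c * h → h.1 0 1 = 0 ∧ h.1 1 0 = 0 ∧ h.1 0 0 * h.1 1 1 = 1 := by
        intro h H
        obtain ⟨e1, e2, e3, e4⟩ := SL_comm_eqs h c H
        rw [hb] at e2
        rw [hc] at e3
        have had' := sub_ne_zero.2 had
        have t1 : h.1 0 1 = 0 := by
          apply mul_left_cancel₀ had'; linear_combination -e2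
        have t2 : h.1 1 0 = 0 := by
          apply mul_left_cancel₀ had'; linear_combination e3
        exact ⟨t1, t2, by rw [t1] at e4; linear_combination e4⟩
      have := Finset.card_le_card_of_injOn (s := Finset.univ.filter fun g : SL 2 p => g * c = c * g)
        (t := (Finset.univ : Finset (ZMod p))) (fun h => h.1 0 0) (fun _ _ => Finset.mem_coe.2 (Finset.mem_univ _)) (by
          intro x hx y hy hxy
          obtain ⟨a1, a2, a3⟩ := hz x (by simpa using hx)
          obtain ⟨b1, b2, b3⟩ := hz y (by simpa using hy)
          have hxy : x.1 0 0 = y.1 0 0 := hxy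
          apply SL_ext2 _ _ hxy (by rw [a1, b1]) (by rw [a2, b2])
          rw [hxy] at a3
          have : y.1 0 0 ≠ 0 := fun h => by rw [h] at b3; simp at b3
          apply mul_left_cancel₀ this
          rw [a3, b3])
      rw [Finset.card_univ, ZMod.card] at this
      omega
    · have := card_le_two_fib (Finset.univ.filter fun g : SL 2 p => g * c = c * g)
        (fun h => h.1 1 0) (fun h => h.1 0 0) (by
          intro x hx y hy hf hu
          obtain ⟨a1, a2, a3, a4⟩ := SL_comm_eqs x c (by simpa using hx)
          obtain ⟨b1, b2, b3, b4⟩ := SL_comm_eqs y c (by simpa using hy)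
          have hf : x.1 1 0 = y.1 1 0 := hf
          have hu : x.1 0 0 = y.1 0 0 := hu
          rw [hf, hu] at a3
          rw [hf] at a1
          refine SL_ext2 _ _ hu ?_ hf ?_
          · apply mul_right_cancel₀ hc; linear_combination a1 - b1
          · apply mul_right_cancel₀ hc; linear_combination a3 - b3)
        (fun z x => z * (c.1 0 0 - c.1 1 1) / c.1 1 0 - x) (by
          intro x hx y hy hf hne
          obtain ⟨a1, a2, a3, a4⟩ := SL_comm_eqs x c (by simpa using hx)
          obtain ⟨b1, b2, b3, b4⟩ := SL_comm_eqs y c (by simpa using hy)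
          have hf : x.1 1 0 = y.1 1 0 := hf
          show y.1 0 0 = x.1 1 0 * (c.1 0 0 - c.1 1 1) / c.1 1 0 - x.1 0 0
          rw [hf] at a1 a3 a4 ⊢
          have hu : x.1 0 0 - y.1 0 0 ≠ 0 := by
            intro hu
            have hu := sub_eq_zero.1 hu
            apply hne
            refine SL_ext2 _ _ hu ?_ hf ?_
            · apply mul_right_cancel₀ hc; linear_combination a1 - b1
            · apply mul_right_cancel₀ hc
              rw [hu] at a3; linear_combination a3 - b3
          rw [eq_sub_iff_add_eq, eq_div_iff hc]
          have hq : x.1 0 1 = y.1 0 1 := by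
            apply mul_right_cancel₀ hc; linear_combination a1 - b1
          rw [hq] at a4
          apply mul_left_cancel₀ hu
          linear_combination c.1 1 0 * (a4 - b4) - x.1 0 0 * a3 + y.1 0 0 * b3)
      rwa [ZMod.card] at this
  · have := card_le_two_fib (Finset.univ.filter fun g : SL 2 p => g * c = c * g)
      (fun h => h.1 0 1) (fun h => h.1 0 0) (by
        intro x hx y hy hf hu
        obtain ⟨a1, a2, a3, a4⟩ := SL_comm_eqs x c (by simpa using hx)
        obtain ⟨b1, b2, b3, b4⟩ := SL_comm_eqs y c (by simpa using hy)
        have hf : x.1 0 1 = y.1 0 1 := hf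
        have hu : x.1 0 0 = y.1 0 0 := hu
        rw [hf, hu] at a2
        rw [hf] at a1
        refine SL_ext2 _ _ hu hf ?_ ?_
        · apply mul_right_cancel₀ hb; linear_combination b1 - a1
        · apply mul_right_cancel₀ hb; linear_combination b2 - a2)
      (fun z x => z * (c.1 0 0 - c.1 1 1) / c.1 0 1 - x) (by
        intro x hx y hy hf hne
        obtain ⟨a1, a2, a3, a4⟩ := SL_comm_eqs x c (by simpa using hx)
        obtain ⟨b1, b2, b3, b4⟩ := SL_comm_eqs y c (by simpa using hy)
        have hf : x.1 0 1 = y.1 0 1 := hf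
        show y.1 0 0 = x.1 0 1 * (c.1 0 0 - c.1 1 1) / c.1 0 1 - x.1 0 0
        rw [hf] at a1 a2 a4 ⊢
        have hq : x.1 1 0 = y.1 1 0 := by
          apply mul_right_cancel₀ hb; linear_combination b1 - a1
        have hu : x.1 0 0 - y.1 0 0 ≠ 0 := by
          intro hu
          have hu := sub_eq_zero.1 hu
          apply hne
          refine SL_ext2 _ _ hu hf hq ?_
          apply mul_right_cancel₀ hb
          rw [hu] at a2; linear_combination b2 - a2
        rw [eq_sub_iff_add_eq, eq_div_iff hb]
        rw [hq] at a4
        apply mul_left_cancel₀ hu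
        linear_combination c.1 0 1 * (a4 - b4) + x.1 0 0 * a2 - y.1 0 0 * b2)
    rwa [ZMod.card] at this

theorem card_SL_ge (p : ℕ) [Fact p.Prime] : p * (p ^ 2 - 1) ≤ Nat.card (SL 2 p) := by
  classical
  let X := {v : ZMod p × ZMod p // v ≠ 0} × ZMod p
  have hX : Fintype.card X = p * (p ^ 2 - 1) := by
    simp only [X, Fintype.card_prod, ZMod.card]
    rw [Fintype.card_subtype_compl, Fintype.card_prod, ZMod.card, Fintype.card_subtype_eq]
    ring_nf
  rw [← hX, Nat.card_eq_fintype_card]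
  let f : X → SL 2 p := fun x =>
    if ha : x.1.1.1 = 0 then
      ⟨!![0, -(x.1.1.2)⁻¹; x.1.1.2, x.2], by
        have : x.1.1.2 ≠ 0 := fun h => x.1.2 (Prod.ext ha h)
        rw [Matrix.det_fin_two]; simp [this]⟩
    else ⟨!![x.1.1.1, x.2; x.1.1.2, (1 + x.2 * x.1.1.2) / x.1.1.1], by
        rw [Matrix.det_fin_two]; simp; field_simp; ring⟩
  refine Fintype.card_le_of_injective f ?_
  have h0 : ∀ x, (f x).1 0 0 = x.1.1.1 := by
    intro x; by_cases ha : x.1.1.1 = 0 <;> simp [f, ha]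
  have h1 : ∀ x, (f x).1 1 0 = x.1.1.2 := by
    intro x; by_cases ha : x.1.1.1 = 0 <;> simp [f, ha]
  intro x y hxy
  have e0 : x.1.1.1 = y.1.1.1 := by rw [← h0, ← h0, hxy]
  have e1 : x.1.1.2 = y.1.1.2 := by rw [← h1, ← h1, hxy]
  refine Prod.ext (Subtype.ext (Prod.ext e0 e1)) ?_
  by_cases ha : x.1.1.1 = 0
  · have hb := e0 ▸ ha
    have := congrArg (fun g : SL 2 p => g.1 1 1) hxy
    simpa [f, ha, hb] using this
  · have hb : y.1.1.1 ≠ 0 := e0 ▸ ha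
    have := congrArg (fun g : SL 2 p => g.1 0 1) hxy
    simpa [f, ha, hb] using this

theorem sum_pow_words {R α : Type*} [Semiring R] [Fintype α] (f : α → R) (m : ℕ) :
    (∑ x, f x) ^ m = ∑ w : Fin m → α, (List.ofFn fun j => f (w j)).prod := by
  induction m with
  | zero => simp
  | succ m ih =>
    rw [pow_succ', ih, ← (Fin.consEquiv (fun _ : Fin (m+1) => α)).sum_comp, Fintype.sum_prod_type,
      Finset.sum_mul_sum]
    refine Finset.sum_congr rfl fun x _ => Finset.sum_congr rfl fun w _ => ?_
    simp [List.ofFn_succ, Fin.consEquiv]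

theorem Amat_pow {G : Type*} [Group G] {n d : ℕ}
    (π : G →* Matrix.unitaryGroup (Fin n) ℂ) (S : Fin d → G) (m : ℕ) :
    Amat π S ^ m = ∑ w : Fin m → Fin d × Bool, (π (wordEval S w) : Matrix (Fin n) (Fin n) ℂ) := by
  have hA : Amat π S = ∑ x : Fin d × Bool,
      (π (if x.2 then S x.1 else (S x.1)⁻¹) : Matrix (Fin n) (Fin n) ℂ) := by
    rw [Fintype.sum_prod_type]
    unfold Amat
    refine Finset.sum_congr rfl fun i _ => ?_
    simp only [Fintype.sum_bool, if_true, Bool.false_eq_true, if_false, map_inv]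
    congr 1
    apply Matrix.inv_eq_left_inv
    rw [← Submonoid.coe_mul]; simp
  rw [hA, sum_pow_words]
  refine Finset.sum_congr rfl fun w _ => ?_
  unfold wordEval
  rw [map_list_prod, Submonoid.coe_list_prod, List.map_ofFn, List.map_ofFn]
  rfl

theorem wordEval_eq_lift {G : Type*} [Group G] {d m : ℕ} (S : Fin d → G)
    (w : Fin m → Fin d × Bool) : wordEval S w = FreeGroup.lift S (wordProd w) := by
  unfold wordEval wordProd
  rw [map_list_prod, List.map_ofFn]
  congr 2
  funext j
  by_cases h : (w j).2 <;> simp [h]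

/-- Fix d ≥ 2, p prime, M = ⌊(1/2)·log_{2d−1}(p)⌋, and F the (nonempty) set of
tuples S ∈ SL₂(ℤ/pℤ)^d such that no nontrivial word of length at most M evaluates at S to ±id.
For every nontrivial irreducible unitary representation π of dimension d(π) and every
1 ≤ m ≤ M:
(1/|F|)·Σ_{S ∈ F} ((1/d(π))·tr(A_{π,S}^m) − N(d,m))² ≤ 2·(2d)^{2m}·|SL₂(ℤ/pℤ)|/((p²−1)·d(π)²). -/
theorem stmt9 (d : ℕ) (hd : 2 ≤ d) (p : ℕ) (hp : p.Prime)
    (M : ℕ) (hM : M = ⌊(1/2 : ℝ) * Real.logb (2 * d - 1) p⌋₊)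
    (F : Finset (Fin d → SL 2 p))
    (hF : ∀ S : Fin d → SL 2 p, S ∈ F ↔
      ∀ m : ℕ, m ≤ M → ∀ w : Fin m → Fin d × Bool, wordProd w ≠ 1 →
        (wordEval S w ≠ 1 ∧ (↑(wordEval S w) : Matrix (Fin 2) (Fin 2) (ZMod p)) ≠ -1))
    (hFne : F.Nonempty)
    (dπ : ℕ) (π : SL 2 p →* Matrix.unitaryGroup (Fin dπ) ℂ)
    (hirr : IsIrreducibleRep π) (hnt : ∃ g, π g ≠ 1)
    (m : ℕ) (hm : 1 ≤ m) (hmM : m ≤ M) :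
    (1 / (F.card : ℝ)) *
        ∑ S ∈ F, ((Amat π S ^ m).trace.re / dπ - (Ntriv d m : ℝ)) ^ 2 ≤
      2 * (2 * d : ℝ) ^ (2 * m) * (Nat.card (SL 2 p) : ℝ) /
        (((p : ℝ) ^ 2 - 1) * (dπ : ℝ) ^ 2) := by
  classical
  haveI : Fact p.Prime := ⟨hp⟩
  have hn : 0 < dπ := by
    rcases Nat.eq_zero_or_pos dπ with h | h
    · subst h
      obtain ⟨g, hg⟩ := hnt
      exact absurd (Subsingleton.elim _ _) hg
    · exact h
  have hnR : (0 : ℝ) < dπ := by exact_mod_cast hn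
  have hp2 : (2 : ℝ) ≤ p := by exact_mod_cast hp.two_le
  have hpp : (0 : ℝ) < (p : ℝ) ^ 2 - 1 := by nlinarith
  have hcard : (p : ℝ) * ((p : ℝ) ^ 2 - 1) ≤ (Nat.card (SL 2 p) : ℝ) := by
    have h := card_SL_ge p
    have h1 : 1 ≤ p ^ 2 := Nat.one_le_pow _ _ hp.pos
    have h2 : ((p * (p ^ 2 - 1) : ℕ) : ℝ) ≤ (Nat.card (SL 2 p) : ℝ) := by exact_mod_cast h
    push_cast [h1] at h2
    exact h2
  set B : ℝ := 2 * (2 * d : ℝ) ^ (2 * m) * (Nat.card (SL 2 p) : ℝ) /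
        (((p : ℝ) ^ 2 - 1) * (dπ : ℝ) ^ 2) with hB
  have hpt : ∀ S ∈ F, ((Amat π S ^ m).trace.re / dπ - (Ntriv d m : ℝ)) ^ 2 ≤ B := by
    intro S hS
    have hSF := (hF S).1 hS m hmM
    let χ : (Fin m → Fin d × Bool) → ℂ := fun w =>
      (π (wordEval S w) : Matrix (Fin dπ) (Fin dπ) ℂ).trace
    let P : Finset (Fin m → Fin d × Bool) := Finset.univ.filter fun w => wordProd w = 1
    let Q : Finset (Fin m → Fin d × Bool) := Finset.univ.filter fun w => ¬ wordProd w = 1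
    have htr : (Amat π S ^ m).trace = (Ntriv d m : ℂ) * dπ + ∑ w ∈ Q, χ w := by
      rw [Amat_pow, Matrix.trace_sum,
        ← Finset.sum_filter_add_sum_filter_not Finset.univ (fun w => wordProd w = 1)]
      congr 1
      rw [Finset.sum_congr rfl (g := fun _ => (dπ : ℂ)), Finset.sum_const, nsmul_eq_mul]
      · congr 2
        rw [Ntriv, Nat.card_eq_fintype_card, Fintype.card_subtype]
      · intro w hw
        rw [wordEval_eq_lift, (Finset.mem_filter.1 hw).2]
        simp
    have hχ : ∀ w ∈ Q, ‖χ w‖ ≤ Real.sqrt (2 * p) := by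
      intro w hw
      obtain ⟨a, b⟩ := hSF w (Finset.mem_filter.1 hw).2
      apply Real.le_sqrt_of_sq_le
      have := char_bound hn π hirr (wordEval S w) (2 * p) (by
        convert centralizer_card (wordEval S w) a b)
      push_cast at this
      exact this
    have hQ : (Q.card : ℝ) ≤ (2 * d : ℝ) ^ m := by
      have : Q.card ≤ (d * 2) ^ m := by
        refine (Finset.card_le_univ _).trans ?_
        simp
      calc (Q.card : ℝ) ≤ (((d * 2) ^ m : ℕ) : ℝ) := by exact_mod_cast this
        _ = _ := by push_cast; rw [mul_comm]
    have hsum : ‖∑ w ∈ Q, χ w‖ ≤ (2 * d : ℝ) ^ m * Real.sqrt (2 * p) := by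
      refine (norm_sum_le_of_le _ hχ).trans ?_
      rw [Finset.sum_const, nsmul_eq_mul]
      exact mul_le_mul_of_nonneg_right hQ (Real.sqrt_nonneg _)
    have hsq : (∑ w ∈ Q, χ w).re ^ 2 ≤ (2 * d : ℝ) ^ (2 * m) * (2 * p) := by
      have h1 : |(∑ w ∈ Q, χ w).re| ≤ (2 * d : ℝ) ^ m * Real.sqrt (2 * p) :=
        (Complex.abs_re_le_norm _).trans hsum
      calc (∑ w ∈ Q, χ w).re ^ 2 = |(∑ w ∈ Q, χ w).re| ^ 2 := (sq_abs _).symm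
        _ ≤ ((2 * d : ℝ) ^ m * Real.sqrt (2 * p)) ^ 2 := by gcongr
        _ = _ := by rw [mul_pow, Real.sq_sqrt (by positivity), ← pow_mul, mul_comm m 2]
    have hre : (Amat π S ^ m).trace.re / dπ - (Ntriv d m : ℝ) = (∑ w ∈ Q, χ w).re / dπ := by
      rw [htr, Complex.add_re]
      have : ((Ntriv d m : ℂ) * dπ).re = (Ntriv d m : ℝ) * dπ := by
        rw [← Complex.ofReal_natCast, ← Complex.ofReal_natCast, ← Complex.ofReal_mul,
          Complex.ofReal_re]
      rw [this]
      field_simp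
      ring
    rw [hre, hB, div_pow, div_le_div_iff₀ (by positivity) (by positivity)]
    have hD : (0 : ℝ) ≤ (2 * d : ℝ) ^ (2 * m) := by positivity
    calc (∑ w ∈ Q, χ w).re ^ 2 * (((p : ℝ) ^ 2 - 1) * (dπ : ℝ) ^ 2)
        ≤ ((2 * d : ℝ) ^ (2 * m) * (2 * p)) * (((p : ℝ) ^ 2 - 1) * (dπ : ℝ) ^ 2) := by gcongr
      _ = 2 * (2 * d : ℝ) ^ (2 * m) * (p * ((p : ℝ) ^ 2 - 1)) * (dπ : ℝ) ^ 2 := by ring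
      _ ≤ _ := by gcongr
  have hFpos : (0 : ℝ) < F.card := by exact_mod_cast hFne.card_pos
  have := Finset.sum_le_card_nsmul F _ B hpt
  rw [nsmul_eq_mul] at this
  rw [one_div, inv_mul_le_iff₀ hFpos]
  exact this
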